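/- Let w be a word in H^1 and k a positive integer. If w = 1 then y ш̄ z_k = z_1 z_k + Σ_{j=0}^{k−2} z_{k−j} z_{j+1} − (k+1) z_{k+1} + z_k z_1, and if w ≠ 1 then y ш̄ z_k w = z_1 z_k w + Σ_{j=0}^{k−2} z_{k−j} z_{j+1} w − k z_{k+1} w + z_k (y ш̄ w), where the summation is treated as 0 when k = 1. -/

import Mathlib

open scoped BigOperators

/-- The two-letter alphabet {x, y}. -/
inductive Letter : Type
  | x : Letter
  | y : Letter
deriving DecidableEq

/-- `H = ℚ⟨x,y⟩`, the noncommutative polynomial ring over ℚ in two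
indeterminates, realized as the monoid algebra of the free monoid on `{x,y}`. -/
abbrev H : Type := MonoidAlgebra ℚ (FreeMonoid Letter)

namespace H

/-- The monomial (word) of `H` corresponding to an element of the free monoid. -/
noncomputable def word (w : FreeMonoid Letter) : H := MonoidAlgebra.single w 1

/-- The generator `x`. -/
noncomputable def X : H := word (FreeMonoid.of Letter.x)

/-- The generator `y`. -/
noncomputable def Y : H := word (FreeMonoid.of Letter.y)

/-- The word `z_k = x^{k-1} y` (for `k ≥ 1`). -/
def zW (k : ℕ) : FreeMonoid Letter :=
  FreeMonoid.ofList (List.replicate (k - 1) Letter.x ++ [Letter.y])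

/-- `z_k = x^{k-1} y` as an element of `H`. -/
noncomputable def z (k : ℕ) : H := word (zW k)

/-- A list `[k₁,…,kₙ]` gives the word `z_{k₁} z_{k₂} ⋯ z_{kₙ}`. -/
def zListW (ks : List ℕ) : FreeMonoid Letter :=
  FreeMonoid.ofList (ks.flatMap fun k => List.replicate (k - 1) Letter.x ++ [Letter.y])

/-- `H¹ = ℚ + Hy` as a ℚ-submodule of `H`. -/
noncomputable def H1 : Submodule ℚ H :=
  LinearMap.range (LinearMap.mulRight ℚ Y) ⊔ Submodule.span ℚ {1}

/-- `H⁰ = ℚ + xHy` as a ℚ-submodule of `H`. -/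
noncomputable def H0 : Submodule ℚ H :=
  LinearMap.range ((LinearMap.mulRight ℚ Y).comp (LinearMap.mulLeft ℚ X)) ⊔
    Submodule.span ℚ {1}

/-- Parse a word of `H¹` into the exponent list of its `z`-decomposition:
`z_{k₁}⋯z_{kₙ} ↦ [k₁,…,kₙ]` (auxiliary accumulator version). -/
def toZAux : List Letter → ℕ → List ℕ
  | [], _ => []
  | Letter.x :: r, n => toZAux r (n + 1)
  | Letter.y :: r, n => (n + 1) :: toZAux r 0

/-- The `z`-decomposition of a word of `H¹`. -/
def toZ (w : FreeMonoid Letter) : List ℕ := toZAux (FreeMonoid.toList w) 0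

/-- The harmonic product on words of `H¹` (via `z`-decompositions):
`1 * w = w * 1 = w` and
`z_k w₁ * z_l w₂ = z_k (w₁ * z_l w₂) + z_l (z_k w₁ * w₂) + z_{k+l} (w₁ * w₂)`. -/
noncomputable def harmW : List ℕ → List ℕ → H
  | [], w => word (zListW w)
  | k :: w1, [] => word (zListW (k :: w1))
  | k :: w1, l :: w2 =>
      z k * harmW w1 (l :: w2) + z l * harmW (k :: w1) w2 + z (k + l) * harmW w1 w2
termination_by w1 w2 => w1.length + w2.length
decreasing_by all_goals simp [Nat.lt_succ_iff] <;> omega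

/-- The n-harmonic product on words of `H¹`:
`1 *̄ w = w *̄ 1 = w` and
`z_k w₁ *̄ z_l w₂ = z_k (w₁ *̄ z_l w₂) + z_l (z_k w₁ *̄ w₂) − z_{k+l} (w₁ *̄ w₂)`. -/
noncomputable def nharmW : List ℕ → List ℕ → H
  | [], w => word (zListW w)
  | k :: w1, [] => word (zListW (k :: w1))
  | k :: w1, l :: w2 =>
      z k * nharmW w1 (l :: w2) + z l * nharmW (k :: w1) w2 - z (k + l) * nharmW w1 w2
termination_by w1 w2 => w1.length + w2.length
decreasing_by all_goals simp [Nat.lt_succ_iff] <;> omega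

/-- The harmonic product `*` on `H¹`, extended ℚ-bilinearly. -/
noncomputable def harm (a b : H) : H :=
  Finsupp.sum a.coeff fun w1 c1 =>
    Finsupp.sum b.coeff fun w2 c2 => (c1 * c2) • harmW (toZ w1) (toZ w2)

/-- The n-harmonic product `*̄` on `H¹`, extended ℚ-bilinearly. -/
noncomputable def nharm (a b : H) : H :=
  Finsupp.sum a.coeff fun w1 c1 =>
    Finsupp.sum b.coeff fun w2 c2 => (c1 * c2) • nharmW (toZ w1) (toZ w2)

/-- The letter exchange `τ(x) = y`, `τ(y) = x`. -/
def τ : Letter → Letter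
  | Letter.x => Letter.y
  | Letter.y => Letter.x

/-- `δ(w) = 1` if `w` is the empty word, `0` otherwise. -/
def δ : List Letter → ℚ
  | [] => 1
  | _ :: _ => 0

/-- The shuffle product on words:
`1 ш w = w ш 1 = w` and `u₁w₁ ш u₂w₂ = u₁(w₁ ш u₂w₂) + u₂(u₁w₁ ш w₂)`. -/
noncomputable def shW : List Letter → List Letter → H
  | [], w => word (FreeMonoid.ofList w)
  | u :: w, [] => word (FreeMonoid.ofList (u :: w))
  | u1 :: w1, u2 :: w2 =>
      word (FreeMonoid.of u1) * shW w1 (u2 :: w2) +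
        word (FreeMonoid.of u2) * shW (u1 :: w1) w2
termination_by w1 w2 => w1.length + w2.length
decreasing_by all_goals simp [Nat.lt_succ_iff]

/-- The n-shuffle product on words: `1 ш̄ w = w ш̄ 1 = w` and
`u₁w₁ ш̄ u₂w₂ = u₁(w₁ ш̄ u₂w₂) + u₂(u₁w₁ ш̄ w₂) − δ(w₁)τ(u₁)u₂w₂ − δ(w₂)τ(u₂)u₁w₁`. -/
noncomputable def nshW : List Letter → List Letter → H
  | [], w => word (FreeMonoid.ofList w)
  | u :: w, [] => word (FreeMonoid.ofList (u :: w))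
  | u1 :: w1, u2 :: w2 =>
      word (FreeMonoid.of u1) * nshW w1 (u2 :: w2) +
        word (FreeMonoid.of u2) * nshW (u1 :: w1) w2 -
        δ w1 • word (FreeMonoid.ofList (τ u1 :: u2 :: w2)) -
        δ w2 • word (FreeMonoid.ofList (τ u2 :: u1 :: w1))
termination_by w1 w2 => w1.length + w2.length
decreasing_by all_goals simp [Nat.lt_succ_iff]

/-- The shuffle product `ш` on `H`, extended ℚ-bilinearly. -/
noncomputable def sh (a b : H) : H :=
  Finsupp.sum a.coeff fun w1 c1 =>
    Finsupp.sum b.coeff fun w2 c2 =>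
      (c1 * c2) • shW (FreeMonoid.toList w1) (FreeMonoid.toList w2)

/-- The n-shuffle product `ш̄` on `H`, extended ℚ-bilinearly. -/
noncomputable def nsh (a b : H) : H :=
  Finsupp.sum a.coeff fun w1 c1 =>
    Finsupp.sum b.coeff fun w2 c2 =>
      (c1 * c2) • nshW (FreeMonoid.toList w1) (FreeMonoid.toList w2)

/-- `S₁`: the ℚ-algebra endomorphism of `H` with `S₁(x) = x`, `S₁(y) = x + y`. -/
noncomputable def S1 : H →ₐ[ℚ] H :=
  MonoidAlgebra.lift ℚ H (FreeMonoid Letter)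
    (FreeMonoid.lift fun u => match u with
      | Letter.x => X
      | Letter.y => X + Y)

/-- `S₂`: the ℚ-algebra endomorphism of `H` with `S₂(x) = x`, `S₂(y) = y − x`. -/
noncomputable def S2 : H →ₐ[ℚ] H :=
  MonoidAlgebra.lift ℚ H (FreeMonoid Letter)
    (FreeMonoid.lift fun u => match u with
      | Letter.x => X
      | Letter.y => Y - X)

/-- `S` on a word: `S(1) = 1` and `S(Fy) = S₁(F)y`. -/
noncomputable def SW (w : FreeMonoid Letter) : H :=
  match (FreeMonoid.toList w).getLast? with
  | some Letter.y =>
      S1 (word (FreeMonoid.ofList (FreeMonoid.toList w).dropLast)) * Y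
  | _ => word w

/-- The ℚ-linear map `S : H¹ → H¹` with `S(1) = 1`, `S(Fy) = S₁(F)y`. -/
noncomputable def S (a : H) : H := Finsupp.sum a.coeff fun w c => c • SW w

/-- `S̃` on a word: `S̃(1) = 1` and `S̃(Fy) = S₂(F)y`. -/
noncomputable def StW (w : FreeMonoid Letter) : H :=
  match (FreeMonoid.toList w).getLast? with
  | some Letter.y =>
      S2 (word (FreeMonoid.ofList (FreeMonoid.toList w).dropLast)) * Y
  | _ => word w

/-- The ℚ-linear map `S̃ : H¹ → H¹` with `S̃(1) = 1`, `S̃(Fy) = S₂(F)y`. -/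
noncomputable def St (a : H) : H := Finsupp.sum a.coeff fun w c => c • StW w

/-- The multiple zeta value `ζ(k₁,…,kₙ)`: the sum over strictly decreasing
tuples `m₁ > m₂ > ⋯ > mₙ > 0` of `1/(m₁^{k₁}⋯mₙ^{kₙ})`. -/
noncomputable def mzeta (ks : List ℕ) : ℝ :=
  ∑' m : {f : Fin ks.length → ℕ // (∀ i, 0 < f i) ∧
      ∀ i j : Fin ks.length, i < j → f j < f i},
    ∏ i : Fin ks.length, ((m.1 i : ℝ) ^ ks.get i)⁻¹

/-- The non-strict multiple zeta value `ζ̄(k₁,…,kₙ)`: the sum over weakly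
decreasing tuples `m₁ ≥ m₂ ≥ ⋯ ≥ mₙ > 0` of `1/(m₁^{k₁}⋯mₙ^{kₙ})`. -/
noncomputable def nmzeta (ks : List ℕ) : ℝ :=
  ∑' m : {f : Fin ks.length → ℕ // (∀ i, 0 < f i) ∧
      ∀ i j : Fin ks.length, i ≤ j → f j ≤ f i},
    ∏ i : Fin ks.length, ((m.1 i : ℝ) ^ ks.get i)⁻¹

/-- The evaluation map `Z : H⁰ → ℝ`, `Z(1) = 1`,
`Z(z_{k₁}⋯z_{kₙ}) = ζ(k₁,…,kₙ)` (extended ℚ-linearly to `H`). -/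
noncomputable def Z (a : H) : ℝ := Finsupp.sum a.coeff fun w c => (c : ℝ) * mzeta (toZ w)

/-- The n-evaluation map `Z̄ : H⁰ → ℝ`, `Z̄(1) = 1`,
`Z̄(z_{k₁}⋯z_{kₙ}) = ζ̄(k₁,…,kₙ)` (extended ℚ-linearly to `H`). -/
noncomputable def Zbar (a : H) : ℝ := Finsupp.sum a.coeff fun w c => (c : ℝ) * nmzeta (toZ w)

/-- `i`-fold n-harmonic power: `a^{*̄ 0} = 1`, `a^{*̄ (i+1)} = a *̄ a^{*̄ i}`. -/
noncomputable def nharmPow : ℕ → H → H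
  | 0, _ => 1
  | i + 1, a => nharm a (nharmPow i a)

/-- `i`-fold n-shuffle power: `a^{ш̄ 0} = 1`, `a^{ш̄ (i+1)} = a ш̄ a^{ш̄ i}`. -/
noncomputable def nshPow : ℕ → H → H
  | 0, _ => 1
  | i + 1, a => nsh a (nshPow i a)

end H

open H

theorem word_mul (a b : FreeMonoid Letter) : word a * word b = word (a * b) := by
  simp [word, MonoidAlgebra.single_mul_single]

theorem nsh_word (a b : FreeMonoid Letter) :
    nsh (word a) (word b) = nshW (FreeMonoid.toList a) (FreeMonoid.toList b) := by
  simp [nsh, word]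

theorem z_one : z 1 = Y := rfl

theorem z_step (n : ℕ) : z (n + 2) = X * z (n + 1) := by
  rw [z, z, X, word_mul]
  rfl

theorem z_step' (n : ℕ) (hn : 0 < n) : z (n + 1) = X * z n := by
  obtain ⟨m, rfl⟩ : ∃ m, n = m + 1 := ⟨n - 1, by omega⟩
  exact z_step m

theorem z_pow (n : ℕ) : z (n + 1) = X ^ n * Y := by
  induction n with
  | zero => simp [z_one]
  | succ n ih => rw [z_step, ih, pow_succ', mul_assoc]

theorem word_consX (l : List Letter) :
    word (FreeMonoid.ofList (Letter.x :: l)) = X * word (FreeMonoid.ofList l) := by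
  rw [X, word_mul]; rfl

theorem word_consY (l : List Letter) :
    word (FreeMonoid.ofList (Letter.y :: l)) = Y * word (FreeMonoid.ofList l) := by
  rw [Y, word_mul]; rfl

theorem word_rep (n : ℕ) (l : List Letter) :
    word (FreeMonoid.ofList (List.replicate n Letter.x ++ Letter.y :: l)) =
      z (n + 1) * word (FreeMonoid.ofList l) := by
  rw [z, word_mul]
  congr 1
  simp [zW, mul_assoc]

theorem nsh_x (l : List Letter) (hl : l ≠ []) :
    nshW [Letter.y] (Letter.x :: l) = Y * (X * word (FreeMonoid.ofList l)) +
      X * nshW [Letter.y] l - X * (X * word (FreeMonoid.ofList l)) := by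
  obtain ⟨a, m, rfl⟩ := List.exists_cons_of_ne_nil hl
  rw [nshW, nshW]
  simp only [δ, τ, one_smul, zero_smul, sub_zero, word_consX]
  rfl

theorem nsh_y (l : List Letter) (hl : l ≠ []) :
    nshW [Letter.y] (Letter.y :: l) = Y * (Y * word (FreeMonoid.ofList l)) +
      Y * nshW [Letter.y] l - X * (Y * word (FreeMonoid.ofList l)) := by
  obtain ⟨a, m, rfl⟩ := List.exists_cons_of_ne_nil hl
  rw [nshW, nshW]
  simp only [δ, τ, one_smul, zero_smul, sub_zero, word_consX, word_consY (a :: m)]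
  rfl

theorem nsh_yy :
    nshW [Letter.y] [Letter.y] = Y * Y + Y * Y - X * Y - X * Y := by
  rw [nshW, nshW, nshW]
  simp only [δ, τ, one_smul, word_consX]
  rfl

theorem nsh_rep (n : ℕ) (l : List Letter) :
    nshW [Letter.y] (List.replicate n Letter.x ++ Letter.y :: l) =
      z 1 * z (n + 1) * word (FreeMonoid.ofList l) +
        (∑ j ∈ Finset.range n, z (n + 1 - j) * z (j + 1) * word (FreeMonoid.ofList l)) -
        (n : ℚ) • (z (n + 2) * word (FreeMonoid.ofList l)) +
        X ^ n * (nshW [Letter.y] (Letter.y :: l) - Y * Y * word (FreeMonoid.ofList l)) := by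
  induction n with
  | zero => simp [z_one]
  | succ n ih =>
    rw [List.replicate_succ, List.cons_append, nsh_x _ (by simp), ih, word_rep,
      Finset.sum_range_succ]
    have hs : ∑ j ∈ Finset.range n, z (n + 1 + 1 - j) * z (j + 1) * word (FreeMonoid.ofList l)
        = X * ∑ j ∈ Finset.range n, z (n + 1 - j) * z (j + 1) * word (FreeMonoid.ofList l) := by
      rw [Finset.mul_sum]
      refine Finset.sum_congr rfl fun j hj => ?_
      have := Finset.mem_range.1 hj
      rw [show n + 1 + 1 - j = (n + 1 - j) + 1 by omega, z_step' _ (by omega)]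
      simp only [mul_assoc]
    rw [hs, show n + 1 + 1 - n = 0 + 2 by omega, z_step 0, z_one, z_step (n + 1), z_step n,
      pow_succ']
    push_cast
    simp only [mul_add, mul_sub, mul_assoc, add_smul, one_smul, mul_smul_comm]
    abel

/-- Lemma 3.2 (i): for a word `w` of `H¹` and a positive integer `k`,
`y ш̄ z_k = z₁z_k + Σ_{j=0}^{k−2} z_{k−j}z_{j+1} − (k+1)z_{k+1} + z_k z₁`
(when `w = 1`) and
`y ш̄ z_k w = z₁z_k w + Σ_{j=0}^{k−2} z_{k−j}z_{j+1} w − k z_{k+1} w + z_k(y ш̄ w)`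
(when `w ≠ 1`), the summation being empty when `k = 1`. -/
theorem lemma_3_2_i (k : ℕ) (hk : 0 < k) (w : FreeMonoid Letter)
    (hw : word w ∈ H1) :
    (w = 1 → nsh Y (z k) =
      z 1 * z k + (∑ j ∈ Finset.range (k - 1), z (k - j) * z (j + 1)) -
        ((k : ℚ) + 1) • z (k + 1) + z k * z 1) ∧
    (w ≠ 1 → nsh Y (z k * word w) =
      z 1 * z k * word w +
        (∑ j ∈ Finset.range (k - 1), z (k - j) * z (j + 1) * word w) -
        (k : ℚ) • (z (k + 1) * word w) + z k * nsh Y (word w)) := by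
  obtain ⟨n, rfl⟩ : ∃ n, k = n + 1 := ⟨k - 1, by omega⟩
  have hone : word (FreeMonoid.ofList []) = 1 := rfl
  constructor
  · intro _
    have h := nsh_rep n []
    rw [nsh_yy, hone] at h
    rw [Y, z, nsh_word]
    refine (show _ = _ from h).trans ?_
    simp only [mul_one, Nat.add_sub_cancel]
    rw [← z, z_one, z_step n, z_pow n]
    have hc : X ^ n * (X * Y) = X * (X ^ n * Y) := by
      rw [← mul_assoc, ← mul_assoc, ← pow_succ, ← pow_succ']
    push_cast
    simp only [mul_sub, mul_add, hc, add_smul, one_smul, mul_assoc]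
    abel
  · intro hne
    have hl : FreeMonoid.toList w ≠ [] := fun h => hne h
    have h := nsh_rep n (FreeMonoid.toList w)
    rw [nsh_y _ hl, FreeMonoid.ofList_toList] at h
    have hz : z (n + 1) * word w = word (FreeMonoid.ofList
        (List.replicate n Letter.x ++ Letter.y :: FreeMonoid.toList w)) := by
      rw [word_rep, FreeMonoid.ofList_toList]
    have hY : nsh Y (word w) = nshW [Letter.y] (FreeMonoid.toList w) := nsh_word _ _
    have hY' : nsh Y (z (n + 1) * word w) = nshW [Letter.y]
        (List.replicate n Letter.x ++ Letter.y :: FreeMonoid.toList w) := by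
      rw [hz]; exact nsh_word _ _
    rw [hY, hY', h]
    simp only [Nat.add_sub_cancel]
    rw [z_one, z_step n, z_pow n]
    have hc : X ^ n * (X * (Y * word w)) = X * (X ^ n * (Y * word w)) := by
      rw [← mul_assoc, ← mul_assoc X, ← pow_succ, ← pow_succ']
    push_cast
    simp only [mul_sub, mul_add, hc, add_smul, one_smul, mul_assoc]
    abel
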